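/- Every L♮-convex function is DDM-convex. Concretely: if f : ℤⁿ → ℝ ∪ {+∞} satisfies discrete midpoint convexity f(x) + f(y) ≥ f(⌈(x+y)/2⌉) + f(⌊(x+y)/2⌋) for all x, y ∈ ℤⁿ (where ⌈·⌉ and ⌊·⌋ are applied componentwise to (x+y)/2), then f is DDM-convex. -/

import Mathlib

open Finset

/-- Directed midpoint `μ(x,y)`: round `(xᵢ+yᵢ)/2` towards `xᵢ`, componentwise:
`μ(x,y)ᵢ = ⌈(xᵢ+yᵢ)/2⌉` if `xᵢ ≥ yᵢ`, and `μ(x,y)ᵢ = ⌊(xᵢ+yᵢ)/2⌋` if `xᵢ < yᵢ`. -/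
def dmu {n : ℕ} (x y : Fin n → ℤ) : Fin n → ℤ := fun i =>
  if y i ≤ x i then ⌈((x i + y i : ℤ) : ℚ) / 2⌉ else ⌊((x i + y i : ℤ) : ℚ) / 2⌋

/-- The ℓ∞-norm of an integer vector, as a natural number. -/
def normInf {n : ℕ} (z : Fin n → ℤ) : ℕ := Finset.univ.sup fun i => (z i).natAbs

/-- A function `f : ℤⁿ → ℝ ∪ {+∞}` is DDM-convex if
`f(x) + f(y) ≥ f(μ(x,y)) + f(μ(y,x))` for all `x, y ∈ ℤⁿ`. -/
def DDMConvexFn {n : ℕ} (f : (Fin n → ℤ) → EReal) : Prop :=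
  ∀ x y : Fin n → ℤ, f (dmu x y) + f (dmu y x) ≤ f x + f y

lemma aux_floor (z : ℤ) : ⌊(z : ℚ) / 2⌋ = z / 2 := by
  rw [Int.floor_eq_iff]
  have h1 : 2 * (z / 2) ≤ z := by omega
  have h2 : z < 2 * (z / 2) + 2 := by omega
  have h1' : (2 : ℚ) * ((z / 2 : ℤ) : ℚ) ≤ z := by exact_mod_cast h1
  have h2' : (z : ℚ) < 2 * ((z / 2 : ℤ) : ℚ) + 2 := by exact_mod_cast h2
  constructor <;> linarith

lemma aux_ceil (z : ℤ) : ⌈(z : ℚ) / 2⌉ = (z + 1) / 2 := by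
  rw [Int.ceil_eq_iff]
  have h1 : 2 * ((z + 1) / 2) ≤ z + 1 := by omega
  have h2 : z ≤ 2 * ((z + 1) / 2) := by omega
  have h1' : (2 : ℚ) * (((z + 1) / 2 : ℤ) : ℚ) ≤ z + 1 := by exact_mod_cast h1
  have h2' : (z : ℚ) ≤ 2 * (((z + 1) / 2 : ℤ) : ℚ) := by exact_mod_cast h2
  constructor <;> linarith

lemma aux_fin {a b : EReal} (ha : a ≠ ⊥) (hb : b ≠ ⊥) (h : a + b ≠ ⊤) : a ≠ ⊤ ∧ b ≠ ⊤ := by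
  constructor
  · rintro rfl; exact h (EReal.top_add_of_ne_bot hb)
  · rintro rfl; exact h (EReal.add_top_of_ne_bot ha)

/-- Cancellation in `ℝ ∪ {+∞}`. -/
lemma aux_cancel {X Y U V P Q R S : EReal} (hX : X ≠ ⊥) (hY : Y ≠ ⊥) (hU : U ≠ ⊥) (hV : V ≠ ⊥)
    (hP : P ≠ ⊥) (hQ : Q ≠ ⊥) (hR : R ≠ ⊥) (hS : S ≠ ⊥)
    (h1 : U + V ≤ X + Y) (h2 : P + R ≤ X + U) (h3 : S + Q ≤ V + Y) (h4 : U + V ≤ R + S) :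
    P + Q ≤ X + Y := by
  by_cases hT : X + Y = ⊤
  · rw [hT]; exact le_top
  obtain ⟨hX', hY'⟩ := aux_fin hX hY hT
  obtain ⟨hU', hV'⟩ := aux_fin hU hV (ne_top_of_le_ne_top hT h1)
  obtain ⟨hP', hR'⟩ := aux_fin hP hR (ne_top_of_le_ne_top (EReal.add_ne_top hX' hU') h2)
  obtain ⟨hS', hQ'⟩ := aux_fin hS hQ (ne_top_of_le_ne_top (EReal.add_ne_top hV' hY') h3)
  lift X to ℝ using ⟨hX', hX⟩
  lift Y to ℝ using ⟨hY', hY⟩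
  lift U to ℝ using ⟨hU', hU⟩
  lift V to ℝ using ⟨hV', hV⟩
  lift P to ℝ using ⟨hP', hP⟩
  lift Q to ℝ using ⟨hQ', hQ⟩
  lift R to ℝ using ⟨hR', hR⟩
  lift S to ℝ using ⟨hS', hS⟩
  norm_cast at *
  linarith

/-- Moving one step on the set where `x - y` attains its (positive) maximum. -/
lemma aux_step {n : ℕ} (f : (Fin n → ℤ) → EReal) (hbot : ∀ x, f x ≠ ⊥)
    (hL : ∀ x y u v : Fin n → ℤ, (∀ i, u i = (x i + y i + 1) / 2) → (∀ i, v i = (x i + y i) / 2) →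
      f u + f v ≤ f x + f y) (N : ℕ) :
    ∀ (x y a : Fin n → ℤ) (m : ℤ), 1 ≤ m → (∀ i, x i - y i ≤ m) →
      (∀ i, a i = if x i - y i = m then 1 else 0) →
      ∑ i, (x i - y i).natAbs = N → f (x - a) + f (y + a) ≤ f x + f y := by
  induction N using Nat.strong_induction_on with
  | _ N ih =>
  intro x y a m hm hmax ha hN
  by_cases hsmall : ∀ i, (x i - y i).natAbs ≤ 1
  · by_cases hm1 : m = 1
    · rw [add_comm]
      apply hL
      · intro i
        have := hsmall i
        have := ha i
        simp only [Pi.add_apply]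
        split_ifs at this <;> omega
      · intro i
        have := hsmall i
        have := ha i
        simp only [Pi.sub_apply]
        split_ifs at this <;> omega
    · have : a = 0 := by
        funext i
        have := hsmall i
        have := ha i
        simp only [Pi.zero_apply]
        split_ifs at this <;> omega
      simp [this]
  · push Not at hsmall
    obtain ⟨j, hj⟩ := hsmall
    obtain ⟨u, hu⟩ : ∃ u : Fin n → ℤ, ∀ i, u i = (x i + y i + 1) / 2 := ⟨_, fun _ => rfl⟩
    obtain ⟨v, hv⟩ : ∃ v : Fin n → ℤ, ∀ i, v i = (x i + y i) / 2 := ⟨_, fun _ => rfl⟩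
    have lt : ∀ p q : Fin n → ℤ,
        (∀ i, p i - q i = (x i - y i) / 2 ∨ p i - q i = (x i - y i + 1) / 2) →
        ∑ i, (p i - q i).natAbs < N := by
      intro p q h
      rw [← hN]
      apply Finset.sum_lt_sum
      · intro i _
        rcases h i with h | h <;> omega
      · refine ⟨j, Finset.mem_univ _, ?_⟩
        rcases h j with h | h <;> omega
    have h1 := hL x y u v hu hv
    rcases Int.even_or_odd' m with ⟨k, hk | hk⟩
    · have h2 := ih _ (lt x u (fun i => by have := hu i; omega)) x u a k (by omega)
        (fun i => by have := hu i; have := hmax i; omega)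
        (fun i => by
          have := hu i; have := hmax i; have := ha i
          split_ifs at this ⊢ <;> omega) rfl
      have h3 := ih _ (lt v y (fun i => by have := hv i; omega)) v y a k (by omega)
        (fun i => by have := hv i; have := hmax i; omega)
        (fun i => by
          have := hv i; have := hmax i; have := ha i
          split_ifs at this ⊢ <;> omega) rfl
      have h4 := hL (u + a) (v - a) u v
        (fun i => by have := hu i; have := hv i; simp only [Pi.add_apply, Pi.sub_apply]; omega)
        (fun i => by have := hu i; have := hv i; simp only [Pi.add_apply, Pi.sub_apply]; omega)
      exact aux_cancel (hbot _) (hbot _) (hbot _) (hbot _) (hbot _) (hbot _) (hbot _) (hbot _)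
        h1 h2 h3 h4
    · have h2 := ih _ (lt x v (fun i => by have := hv i; omega)) x v a (k + 1) (by omega)
        (fun i => by have := hv i; have := hmax i; omega)
        (fun i => by
          have := hv i; have := hmax i; have := ha i
          split_ifs at this ⊢ <;> omega) rfl
      have h3 := ih _ (lt u y (fun i => by have := hu i; omega)) u y a (k + 1) (by omega)
        (fun i => by have := hu i; have := hmax i; omega)
        (fun i => by
          have := hu i; have := hmax i; have := ha i
          split_ifs at this ⊢ <;> omega) rfl
      have h4 := hL (v + a) (u - a) u v
        (fun i => by have := hu i; have := hv i; simp only [Pi.add_apply, Pi.sub_apply]; omega)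
        (fun i => by have := hu i; have := hv i; simp only [Pi.add_apply, Pi.sub_apply]; omega)
      rw [add_comm (f u)] at h1 h4
      exact aux_cancel (hbot _) (hbot _) (hbot _) (hbot _) (hbot _) (hbot _) (hbot _) (hbot _)
        h1 h2 h3 h4

lemma aux_dmu {n : ℕ} (x y : Fin n → ℤ) (i : Fin n) :
    dmu x y i = if y i ≤ x i then (x i + y i + 1) / 2 else (x i + y i) / 2 := by
  simp only [dmu, aux_floor, aux_ceil]

lemma aux_main {n : ℕ} (f : (Fin n → ℤ) → EReal)
    (hs : ∀ (x y a : Fin n → ℤ) (m : ℤ), 1 ≤ m → (∀ i, x i - y i ≤ m) →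
      (∀ i, a i = if x i - y i = m then 1 else 0) → f (x - a) + f (y + a) ≤ f x + f y) (N : ℕ) :
    ∀ (x y : Fin n → ℤ), ∑ i, (x i - y i).natAbs = N →
      f (dmu x y) + f (dmu y x) ≤ f x + f y := by
  induction N using Nat.strong_induction_on with
  | _ N ih =>
  -- the case where some coordinate of `x - y` is at least two
  have key : ∀ (x y : Fin n → ℤ), ∑ i, (x i - y i).natAbs = N → (∃ j, 2 ≤ x j - y j) →
      f (dmu x y) + f (dmu y x) ≤ f x + f y := by
    rintro x y hN ⟨j, hj⟩
    obtain ⟨k, -, hk⟩ := Finset.exists_max_image Finset.univ (fun i => x i - y i)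
      ⟨j, Finset.mem_univ j⟩
    have hkj := hk j (Finset.mem_univ _)
    obtain ⟨a, ha⟩ : ∃ a : Fin n → ℤ, ∀ i, a i = if x i - y i = x k - y k then 1 else 0 :=
      ⟨_, fun _ => rfl⟩
    have h1 := hs x y a (x k - y k) (by omega) (fun i => hk i (Finset.mem_univ _)) ha
    have hlt : ∑ i, ((x - a) i - (y + a) i).natAbs < N := by
      rw [← hN]
      apply Finset.sum_lt_sum
      · intro i _
        have := ha i
        simp only [Pi.add_apply, Pi.sub_apply]
        split_ifs at this <;> omega
      · refine ⟨k, Finset.mem_univ _, ?_⟩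
        have := ha k
        simp only [Pi.add_apply, Pi.sub_apply]
        split_ifs at this <;> omega
    have h2 := ih _ hlt (x - a) (y + a) rfl
    have e1 : dmu (x - a) (y + a) = dmu x y := by
      funext i
      have := ha i
      simp only [aux_dmu, Pi.add_apply, Pi.sub_apply]
      split_ifs at this ⊢ <;> omega
    have e2 : dmu (y + a) (x - a) = dmu y x := by
      funext i
      have := ha i
      simp only [aux_dmu, Pi.add_apply, Pi.sub_apply]
      split_ifs at this ⊢ <;> omega
    rw [e1, e2] at h2
    exact h2.trans h1
  intro x y hN
  by_cases h1 : ∃ j, 2 ≤ x j - y j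
  · exact key x y hN h1
  by_cases h2 : ∃ j, 2 ≤ y j - x j
  · have := key y x (by rw [← hN]; exact Finset.sum_congr rfl (fun i _ => by omega)) h2
    rwa [add_comm, add_comm (f x)]
  push Not at h1 h2
  have e1 : dmu x y = x := by
    funext i
    have := h1 i
    have := h2 i
    rw [aux_dmu]
    split_ifs <;> omega
  have e2 : dmu y x = y := by
    funext i
    have := h1 i
    have := h2 i
    rw [aux_dmu]
    split_ifs <;> omega
  rw [e1, e2]

/-- Every L♮-convex function is DDM-convex: if `f : ℤⁿ → ℝ ∪ {+∞}` satisfies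
discrete midpoint convexity `f(x) + f(y) ≥ f(⌈(x+y)/2⌉) + f(⌊(x+y)/2⌋)`
for all `x, y ∈ ℤⁿ`, then `f` is DDM-convex. -/
theorem lnatConvex_to_ddmConvex {n : ℕ} (f : (Fin n → ℤ) → EReal)
    (hbot : ∀ x, f x ≠ ⊥)
    (hL : ∀ x y : Fin n → ℤ,
      f (fun i => ⌈((x i + y i : ℤ) : ℚ) / 2⌉) + f (fun i => ⌊((x i + y i : ℤ) : ℚ) / 2⌋)
        ≤ f x + f y) :
    DDMConvexFn f := by
  have hL' : ∀ x y u v : Fin n → ℤ, (∀ i, u i = (x i + y i + 1) / 2) →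
      (∀ i, v i = (x i + y i) / 2) → f u + f v ≤ f x + f y := by
    intro x y u v hu hv
    have h := hL x y
    simp only [aux_floor, aux_ceil] at h
    rw [funext hu, funext hv]
    exact h
  intro x y
  exact aux_main f (fun x y a m hm hmax ha => aux_step f hbot hL' _ x y a m hm hmax ha rfl) _ x y rfl
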